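/- arXiv:2207.02525 — 2 statements merged into one kernel-verified Lean document; each statement's English description precedes it below -/
import Mathlib

section
/- For λ on the unit circle and n a positive integer, the weighted Bergman space A²(dν_{λ,n}), where dν_{λ,n}(z) = (1/(n!(n-1)!)) · ((1-|z|²)/|z-λ|²) · (1-|z|²)^{n-1} dA(z), is a reproducing kernel Hilbert space with reproducing kernel (n+1)!(n-1)! · (z-λ)(w̄-λ̄)/(1-z w̄)^{n+2}. -/
/-!
Multiplication by `1/(z-λ)`, which is holomorphic on the disc because `|λ| = 1`, turns the claim
into the reproducing formula of the standard weighted Bergman space: for `g = f/(z-λ)`, the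
integrand `f · conj K(·,w) · wgt` is `(n+1)(w-λ) · g(z)(1-|z|²)^n / (1-z̄w)^(n+2)`, so everything
rests on
`∫_𝔻 g(z) (1-|z|²)^n / (1-z̄w)^(n+2) dxdy = π/(n+1) · g(w)` (`weighted_reproducing`).

In polar coordinates (`polar_ball`), on `|z| = r` one has `z̄ = r²/z`, so the angular integral is a
contour integral of `g(z) z^(n+1) / (z-r²w)^(n+2)`. Its only singularity `r²w` lies inside both
`|z| = r` and any fixed circle `|z| = ρ` with `|w| < ρ < 1`, so the contour can be moved to
`|z| = ρ` for all `r` at once (`circle_mean`). Exchanging the integrals, the `r`-integral is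
elementary and leaves the Cauchy kernel `z/(z-w)` (`radial_integral`); Cauchy's formula gives `g(w)`.

Membership of the kernel function in the space holds because `|K(z,w)|² wgt(z)` is bounded on the
disc (`kernel_bound`).
-/

open MeasureTheory Metric Complex
open scoped ENNReal NNReal

/-- The normalized Lebesgue area measure on ℂ (so the unit disc has mass 1). -/
noncomputable def nA : Measure ℂ := (ENNReal.ofReal Real.pi)⁻¹ • volume

/-- The density of the measure `ν_{λ,n}` with respect to the normalized area measure:
`(1/(n!(n-1)!)) · ((1-|z|²)/|z-λ|²) · (1-|z|²)^{n-1}`. -/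
noncomputable def wgt (lam : ℂ) (n : ℕ) (z : ℂ) : ℝ :=
  (1 / ((n.factorial : ℝ) * ((n-1).factorial : ℝ))) *
    ((1 - ‖z‖^2) / ‖z - lam‖^2) * (1 - ‖z‖^2)^(n-1)

/-- The claimed reproducing kernel `(n+1)!(n-1)! (z-λ)(w̄-λ̄)/(1-z w̄)^{n+2}`. -/
noncomputable def Kker (lam : ℂ) (n : ℕ) (z w : ℂ) : ℂ :=
  (((n+1).factorial : ℂ) * ((n-1).factorial : ℂ)) * (z - lam) *
    ((starRingEnd ℂ) w - (starRingEnd ℂ) lam) / (1 - z * (starRingEnd ℂ) w) ^ (n+2)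

/-! ### The denominator of the kernel -/

lemma le_norm_one_sub (z w : ℂ) (hz : ‖z‖ < 1) : 1 - ‖w‖ ≤ ‖1 - (starRingEnd ℂ) z * w‖ := by
  have h1 := norm_sub_norm_le (1:ℂ) ((starRingEnd ℂ) z * w)
  rw [norm_one, norm_mul, RCLike.norm_conj] at h1
  nlinarith [norm_nonneg w]

lemma one_sub_conj_mul_ne (z w : ℂ) (hz : ‖z‖ < 1) (hw : ‖w‖ < 1) :
    1 - (starRingEnd ℂ) z * w ≠ 0 := by
  have := le_norm_one_sub z w hz
  exact norm_pos_iff.1 (by linarith)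

/-! ### Polar coordinates and contour deformation -/

/-- Polar coordinates on the unit disc, for a function that is continuous and integrable there. -/
lemma polar_ball (F : ℂ → ℂ) (hc : ContinuousOn F (ball (0:ℂ) 1))
    (hi : IntegrableOn F (ball (0:ℂ) 1) volume) :
    ∫ z in ball (0:ℂ) 1, F z =
      ∫ r in (0:ℝ)..1, ∫ θ in (0:ℝ)..2 * Real.pi, (r:ℂ) * F (circleMap 0 r θ) := by
  have hpi := Real.pi_pos
  set G : ℂ → ℂ := (ball (0:ℂ) 1).indicator F with hG
  have hGm : Measurable G := by
    classical
    have := hc.measurable_piecewise (g := fun _ => (0:ℂ)) continuousOn_const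
      (isOpen_ball.measurableSet)
    rw [hG, ← Set.piecewise_eq_indicator]
    exact this
  have hGi : Integrable G volume := (integrable_indicator_iff isOpen_ball.measurableSet).2 hi
  have hsymm : Measurable (fun p : ℝ × ℝ => Complex.polarCoord.symm p) := by
    simp only [Complex.polarCoord_symm_apply]
    fun_prop
  have hP : IntegrableOn (fun p : ℝ × ℝ => p.1 • G (Complex.polarCoord.symm p))
      (Set.Ioi (0:ℝ) ×ˢ Set.Ioo (-Real.pi) Real.pi) (volume.prod volume) := by
    refine ⟨?_, ?_⟩
    · exact (measurable_fst.smul (hGm.comp hsymm)).aestronglyMeasurable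
    · rw [hasFiniteIntegral_iff_enorm]
      have h := Complex.lintegral_comp_polarCoord_symm (fun z => ‖G z‖ₑ)
      rw [polarCoord_target] at h
      have h2 := hGi.2
      rw [hasFiniteIntegral_iff_enorm, ← h] at h2
      refine lt_of_le_of_lt (le_of_eq ?_) h2
      refine setLIntegral_congr_fun (measurableSet_Ioi.prod measurableSet_Ioo) ?_
      intro p hp
      have hp1 : 0 < p.1 := hp.1
      simp only [enorm_smul, smul_eq_mul]
      rw [Real.enorm_eq_ofReal hp1.le]
  rw [← integral_indicator isOpen_ball.measurableSet, ← hG,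
    ← Complex.integral_comp_polarCoord_symm, polarCoord_target, Measure.volume_eq_prod,
    setIntegral_prod _ hP, intervalIntegral.integral_of_le zero_le_one,
    integral_Ioc_eq_integral_Ioo]
  have hsub : Set.Ioo (0:ℝ) 1 ⊆ Set.Ioi 0 := fun x hx => hx.1
  have key : ∀ r : ℝ, 0 < r → ∀ θ : ℝ, Complex.polarCoord.symm (r, θ) = circleMap 0 r θ := by
    intro r _ θ
    simp [circleMap, Complex.exp_mul_I]
  refine (setIntegral_eq_of_subset_of_forall_sdiff_eq_zero measurableSet_Ioi hsub ?_).trans ?_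
  rotate_left
  · refine setIntegral_congr_fun measurableSet_Ioo ?_
    intro r hr
    have hper : Function.Periodic (fun θ : ℝ => (r:ℂ) * F (circleMap 0 r θ)) (2 * Real.pi) := by
      intro θ
      simp only [periodic_circleMap 0 r θ]
    have h1 := hper.intervalIntegral_add_eq 0 (-Real.pi)
    rw [zero_add, show -Real.pi + 2 * Real.pi = Real.pi by ring] at h1
    simp only
    rw [h1, intervalIntegral.integral_of_le (by linarith), integral_Ioc_eq_integral_Ioo]
    refine setIntegral_congr_fun measurableSet_Ioo ?_
    intro θ _
    simp only
    rw [key r hr.1 θ, hG, Set.indicator_of_mem, real_smul]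
    simp [abs_of_pos hr.1, hr.2]
  · intro r hr
    have hr0 : 0 < r := hr.1
    have hr1 : 1 ≤ r := by
      by_contra h
      exact hr.2 ⟨hr0, not_le.1 h⟩
    have : ∀ θ : ℝ, r • G (Complex.polarCoord.symm (r, θ)) = 0 := by
      intro θ
      rw [key r hr0 θ, hG, Set.indicator_of_notMem, smul_zero]
      simp [abs_of_pos hr0, hr1]
    simp_rw [this]
    exact integral_zero _ _

/-- Contour deformation: both circles enclose the only singularity `a`. -/
lemma circle_deform (g : ℂ → ℂ) (hg : DifferentiableOn ℂ g (ball (0:ℂ) 1)) (a : ℂ) (n : ℕ)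
    {r R : ℝ} (hr : 0 < r) (hrR : r ≤ R) (hR : R < 1) (ha : ‖a‖ < r) :
    (∮ z in C(0, R), g z * z ^ (n+1) / (z - a) ^ (n+2)) =
      ∮ z in C(0, r), g z * z ^ (n+1) / (z - a) ^ (n+2) := by
  have hd : ∀ z : ℂ, r ≤ ‖z‖ → ‖z‖ ≤ R →
      DifferentiableAt ℂ (fun z => g z * z ^ (n+1) / (z - a) ^ (n+2)) z := by
    intro z h1 h2
    have hz : z ∈ ball (0:ℂ) 1 := by simpa using lt_of_le_of_lt h2 hR
    have hgz := hg.differentiableAt (isOpen_ball.mem_nhds hz)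
    have hne : (z - a) ^ (n+2) ≠ 0 := by
      apply pow_ne_zero
      rw [sub_ne_zero]
      rintro rfl
      linarith
    exact (hgz.mul (by fun_prop)).div (by fun_prop) hne
  refine circleIntegral_eq_of_differentiable_on_annulus_off_countable hr hrR
    Set.countable_empty ?_ ?_
  · intro z hz
    simp only [Set.mem_sdiff, mem_closedBall, dist_zero_right, mem_ball, not_lt] at hz
    exact (hd z hz.2 hz.1).continuousAt.continuousWithinAt
  · intro z hz
    simp only [Set.mem_sdiff, mem_closedBall, dist_zero_right, mem_ball, not_le,
      Set.mem_empty_iff_false, not_false_eq_true, and_true] at hz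
    exact hd z hz.2.le hz.1.le

/-- `dz = i z dθ` on a circle centred at `0`. -/
lemma circle_param (h : ℂ → ℂ) (R : ℝ) :
    ∫ θ in (0:ℝ)..2 * Real.pi, circleMap 0 R θ * h (circleMap 0 R θ) =
      -I * ∮ z in C(0, R), h z := by
  rw [circleIntegral, ← intervalIntegral.integral_const_mul]
  congr 1
  ext θ
  simp only [deriv_circleMap, smul_eq_mul]
  linear_combination ((circleMap 0 R θ * h (circleMap 0 R θ))) * I_mul_I

/-- On `|z| = r` one has `z̄ = r² / z`, which turns the antiholomorphic kernel into a rational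
function of `z` whose pole `r² w` lies inside every circle used here; the mean over `|z| = r` may
thus be computed over a circle `|z| = ρ` independent of `r`. -/
lemma circle_mean (g : ℂ → ℂ) (hg : DifferentiableOn ℂ g (ball (0:ℂ) 1)) (w : ℂ) (n : ℕ)
    {r ρ : ℝ} (hr : 0 < r) (hr1 : r < 1) (hρ1 : ρ < 1) (hw : ‖w‖ < ρ) :
    ∫ θ in (0:ℝ)..2 * Real.pi,
        g (circleMap 0 r θ) / (1 - (starRingEnd ℂ) (circleMap 0 r θ) * w) ^ (n+2) =
      ∫ θ in (0:ℝ)..2 * Real.pi, g (circleMap 0 ρ θ) *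
        (circleMap 0 ρ θ ^ (n+2) / (circleMap 0 ρ θ - (r:ℂ)^2 * w) ^ (n+2)) := by
  have hρ : 0 < ρ := (norm_nonneg w).trans_lt hw
  have hn0 := norm_nonneg w
  have har : ‖(r:ℂ)^2 * w‖ < r := by
    rw [norm_mul, norm_pow, norm_real, Real.norm_of_nonneg hr.le]
    nlinarith
  have haρ : ‖(r:ℂ)^2 * w‖ < ρ := by
    rw [norm_mul, norm_pow, norm_real, Real.norm_of_nonneg hr.le]
    have : r^2 ≤ 1 := by nlinarith
    nlinarith
  set a : ℂ := (r:ℂ)^2 * w with ha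
  have e : (∮ z in C(0, r), g z * z ^ (n+1) / (z - a) ^ (n+2)) =
      ∮ z in C(0, ρ), g z * z ^ (n+1) / (z - a) ^ (n+2) := by
    rcases le_total r ρ with h | h
    · exact (circle_deform g hg a n hr h hρ1 har).symm
    · exact circle_deform g hg a n hρ h hr1 haρ
  have e2 := congrArg (fun x => -I * x) e
  simp only [← circle_param] at e2
  calc _ = ∫ θ in (0:ℝ)..2 * Real.pi, circleMap 0 r θ *
        (g (circleMap 0 r θ) * circleMap 0 r θ ^ (n+1) / (circleMap 0 r θ - a) ^ (n+2)) := by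
        congr 1
        ext θ
        have hz0 : circleMap 0 r θ ≠ 0 := circleMap_ne_center hr.ne'
        have hzz : (starRingEnd ℂ) (circleMap 0 r θ) * circleMap 0 r θ = (r:ℂ)^2 := by
          rw [mul_comm, mul_conj, normSq_eq_norm_sq, norm_circleMap_zero, abs_of_pos hr]
          push_cast; rfl
        have : circleMap 0 r θ - a =
            circleMap 0 r θ * (1 - (starRingEnd ℂ) (circleMap 0 r θ) * w) := by
          rw [ha, ← hzz]; ring
        rw [this, mul_pow, ← mul_div_assoc,
          show circleMap 0 r θ * (g (circleMap 0 r θ) * circleMap 0 r θ ^ (n+1)) =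
            circleMap 0 r θ ^ (n+2) * g (circleMap 0 r θ) by ring,
          mul_div_mul_left _ _ (pow_ne_zero _ hz0)]
    _ = _ := e2
    _ = _ := by
        congr 1
        ext θ
        ring

/-! ### The radial integral and the standard weighted Bergman formula -/

/-- The radial integral; the integrand has the primitive
`-(z^(n+2)/(z-w)) ((1-r²)/(z-r²w))^(n+1)`. -/
lemma radial_integral (z w : ℂ) (hzw : ‖w‖ < ‖z‖) (n : ℕ) :
    ∫ r in (0:ℝ)..1, (2 * (n+1) * r * (1 - (r:ℂ)^2)^n : ℂ) *
        (z^(n+2) / (z - (r:ℂ)^2 * w)^(n+2)) = z / (z - w) := by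
  have hz0 : z ≠ 0 := by
    rintro rfl
    simp at hzw
    linarith [norm_nonneg w]
  have hne : ∀ r : ℝ, r ∈ Set.uIcc (0:ℝ) 1 → z - (r:ℂ)^2 * w ≠ 0 := by
    intro r hr h
    rw [Set.uIcc_of_le zero_le_one] at hr
    rw [sub_eq_zero] at h
    have := congrArg norm h
    rw [norm_mul, norm_pow, norm_real, Real.norm_of_nonneg hr.1] at this
    have h1 : r^2 ≤ 1 := by nlinarith [hr.1, hr.2]
    nlinarith [norm_nonneg w]
  have hzw' : z - w ≠ 0 := by simpa using hne 1 (by simp)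
  have hder : ∀ r ∈ Set.uIcc (0:ℝ) 1, HasDerivAt
      (fun r : ℝ => -(z^(n+2) / (z - w)) * ((1 - (r:ℂ)^2)^(n+1) / (z - (r:ℂ)^2 * w)^(n+1)))
      ((2 * (n+1) * r * (1 - (r:ℂ)^2)^n : ℂ) * (z^(n+2) / (z - (r:ℂ)^2 * w)^(n+2))) r := by
    intro r hr
    have hr' := hne r hr
    have hsq : HasDerivAt (fun r : ℝ => (r:ℂ)^2) (2 * r) r := by
      have := (hasDerivAt_id (r:ℝ)).ofReal_comp.fun_pow 2
      simpa using this
    have h1 := (hsq.const_sub 1).fun_pow (n+1)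
    have h2 := ((hsq.mul_const w).const_sub z).fun_pow (n+1)
    have h3 := (h1.fun_div h2 (pow_ne_zero _ hr')).const_mul (-(z^(n+2) / (z - w)))
    refine h3.congr_deriv ?_
    -- Writing `d` for the denominator and `u` for `1-r²`, the derivative identity is
    -- polynomial once `z - w` is expressed as `d - u w`.
    have he : z - w = (z - (r:ℂ)^2 * w) - (1 - (r:ℂ)^2) * w := by ring
    have he' := he ▸ hzw'
    rw [he, Nat.add_sub_cancel]
    push_cast
    generalize z - (r:ℂ)^2 * w = d at *
    generalize 1 - (r:ℂ)^2 = u at *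
    generalize z^(n+2) = Z
    field_simp
    ring
  rw [intervalIntegral.integral_eq_sub_of_hasDerivAt hder]
  · simp
    field_simp
    ring
  · apply ContinuousOn.intervalIntegrable
    refine ContinuousOn.mul (by fun_prop) (ContinuousOn.div (by fun_prop) (by fun_prop) ?_)
    intro r hr
    exact pow_ne_zero _ (hne r hr)

/-- The reproducing formula of the standard weighted Bergman space with weight `(1-|z|²)^n`. -/
lemma weighted_reproducing (g : ℂ → ℂ) (hg : DifferentiableOn ℂ g (ball (0:ℂ) 1)) (w : ℂ)
    (hw : ‖w‖ < 1) (n : ℕ)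
    (hi : IntegrableOn (fun z => g z * (1 - (‖z‖:ℂ)^2)^n / (1 - (starRingEnd ℂ) z * w)^(n+2))
      (ball (0:ℂ) 1) volume) :
    ∫ z in ball (0:ℂ) 1, g z * (1 - (‖z‖:ℂ)^2)^n / (1 - (starRingEnd ℂ) z * w)^(n+2) =
      Real.pi / (n+1) * g w := by
  -- A radius `ρ` strictly above `|w|`, so that the swapped integrand is continuous on the compact
  -- rectangle `[0,1] × [0,2π]`, including `r = 1`.
  obtain ⟨ρ, hwρ, hρ1⟩ := exists_between hw
  have hρ : 0 < ρ := (norm_nonneg w).trans_lt hwρ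
  have hn1 : (n:ℂ) + 1 ≠ 0 := by exact_mod_cast n.succ_ne_zero
  have hnorm : ∀ θ, ‖circleMap 0 ρ θ‖ = ρ := fun θ => by
    rw [norm_circleMap_zero, abs_of_pos hρ]
  have hgc : Continuous fun θ => g (circleMap 0 ρ θ) := by
    refine hg.continuousOn.comp_continuous (continuous_circleMap 0 ρ) ?_
    intro θ
    simpa [hnorm] using hρ1
  have hgd : DifferentiableOn ℂ g (closedBall (0:ℂ) ρ) :=
    hg.mono (closedBall_subset_ball hρ1)
  rw [polar_ball _ ?_ hi]
  · calc
      _ = ∫ r in (0:ℝ)..1, ∫ θ in (0:ℝ)..2 * Real.pi, 1 / (2 * ((n:ℂ)+1)) *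
            ((2 * (n+1) * r * (1 - (r:ℂ)^2)^n : ℂ) * (g (circleMap 0 ρ θ) *
            (circleMap 0 ρ θ ^ (n+2) / (circleMap 0 ρ θ - (r:ℂ)^2 * w) ^ (n+2)))) := by
          rw [intervalIntegral.integral_of_le zero_le_one, integral_Ioc_eq_integral_Ioo,
            intervalIntegral.integral_of_le zero_le_one, integral_Ioc_eq_integral_Ioo]
          refine setIntegral_congr_fun measurableSet_Ioo ?_
          intro r hr
          simp only
          rw [intervalIntegral.integral_const_mul, intervalIntegral.integral_const_mul,
            intervalIntegral.integral_const_mul,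
            ← circle_mean g hg w n hr.1 hr.2 hρ1 hwρ, ← intervalIntegral.integral_const_mul,
            ← mul_assoc, ← intervalIntegral.integral_const_mul]
          congr 1
          ext θ
          rw [norm_circleMap_zero, abs_of_pos hr.1]
          field_simp
      _ = ∫ θ in (0:ℝ)..2 * Real.pi, ∫ r in (0:ℝ)..1, 1 / (2 * ((n:ℂ)+1)) *
            ((2 * (n+1) * r * (1 - (r:ℂ)^2)^n : ℂ) * (g (circleMap 0 ρ θ) *
            (circleMap 0 ρ θ ^ (n+2) / (circleMap 0 ρ θ - (r:ℂ)^2 * w) ^ (n+2)))) := by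
          apply intervalIntegral_intervalIntegral_swap
          have hcont : ContinuousOn (Function.uncurry fun (r θ : ℝ) => 1 / (2 * ((n:ℂ)+1)) *
            ((2 * (n+1) * r * (1 - (r:ℂ)^2)^n : ℂ) * (g (circleMap 0 ρ θ) *
            (circleMap 0 ρ θ ^ (n+2) / (circleMap 0 ρ θ - (r:ℂ)^2 * w) ^ (n+2)))))
            (Set.Icc 0 1 ×ˢ Set.Icc 0 (2 * Real.pi)) := by
            have hcm : Continuous fun p : ℝ × ℝ => circleMap 0 ρ p.2 :=
              (continuous_circleMap 0 ρ).comp continuous_snd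
            have hgp : Continuous fun p : ℝ × ℝ => g (circleMap 0 ρ p.2) :=
              hgc.comp continuous_snd
            have hnum : Continuous fun p : ℝ × ℝ =>
              (2 * (n+1) * (p.1:ℂ) * (1 - (p.1:ℂ)^2)^n : ℂ) := by fun_prop
            have hden : Continuous fun p : ℝ × ℝ =>
              (circleMap 0 ρ p.2 - (p.1:ℂ)^2 * w) ^ (n+2) := by fun_prop
            refine continuousOn_const.mul (hnum.continuousOn.mul (hgp.continuousOn.mul
              ((hcm.pow (n+2)).continuousOn.div hden.continuousOn ?_)))
            rintro ⟨r, θ⟩ ⟨hr, -⟩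
            apply pow_ne_zero
            intro h
            rw [sub_eq_zero] at h
            have := congrArg norm h
            simp only at hr
            rw [hnorm, norm_mul, norm_pow, norm_real, Real.norm_of_nonneg hr.1] at this
            have h1 : r^2 ≤ 1 := by nlinarith [hr.1, hr.2]
            nlinarith [norm_nonneg w]
          refine (hcont.integrableOn_compact (isCompact_Icc.prod isCompact_Icc)).mono_set ?_
          rw [Set.uIoc_of_le zero_le_one, Set.uIoc_of_le Real.two_pi_pos.le]
          exact Set.prod_mono Set.Ioc_subset_Icc_self Set.Ioc_subset_Icc_self
      _ = ∫ θ in (0:ℝ)..2 * Real.pi, 1 / (2 * ((n:ℂ)+1)) *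
            (circleMap 0 ρ θ * ((circleMap 0 ρ θ - w)⁻¹ • g (circleMap 0 ρ θ))) := by
          congr 1
          ext θ
          rw [intervalIntegral.integral_const_mul]
          simp_rw [mul_left_comm _ (g (circleMap 0 ρ θ))]
          rw [intervalIntegral.integral_const_mul,
            radial_integral _ w (by rwa [hnorm]) n, smul_eq_mul]
          ring
      _ = _ := by
          rw [intervalIntegral.integral_const_mul,
            circle_param (fun z => (z - w)⁻¹ • g z),
            hgd.circleIntegral_sub_inv_smul (by simpa using hwρ), smul_eq_mul]
          field_simp
          linear_combination (-g w) * I_sq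
  · refine ContinuousOn.div (hg.continuousOn.mul (by fun_prop)) (by fun_prop) ?_
    intro z hz
    exact pow_ne_zero _ (one_sub_conj_mul_ne z w (by simpa using hz) hw)

/-! ### Reduction to the weight `(1-|z|²)^n` -/

/-- With the factorial constant split off, the weight is `(1-|z|²)^n / |z-λ|²`. -/
lemma wgt_eq (lam : ℂ) (n : ℕ) (hn : 1 ≤ n) (z : ℂ) :
    wgt lam n z = (1 / ((n.factorial : ℝ) * ((n-1).factorial : ℝ))) *
      ((1 - ‖z‖^2)^n / ‖z - lam‖^2) := by
  obtain ⟨m, rfl⟩ : ∃ m, n = m + 1 := ⟨n - 1, by omega⟩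
  rw [wgt]
  simp only [Nat.add_sub_cancel]
  ring

lemma wgt_nonneg (lam : ℂ) (n : ℕ) (hn : 1 ≤ n) (z : ℂ) (hz : ‖z‖ < 1) : 0 ≤ wgt lam n z := by
  have : 0 ≤ 1 - ‖z‖^2 := by nlinarith [norm_nonneg z]
  rw [wgt_eq lam n hn]
  positivity

lemma sub_lam_ne (lam : ℂ) (hlam : ‖lam‖ = 1) (z : ℂ) (hz : ‖z‖ < 1) : z - lam ≠ 0 := by
  rw [sub_ne_zero]
  rintro rfl
  linarith

lemma coe_integrand (f : ℂ → ℂ) (lam : ℂ) (n : ℕ) (z : ℂ) :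
    (‖f z‖₊ : ℝ≥0∞) ^ 2 * ENNReal.ofReal (wgt lam n z) =
      ENNReal.ofReal (‖f z‖^2 * wgt lam n z) := by
  rw [ENNReal.ofReal_mul (by positivity), ENNReal.ofReal_pow (norm_nonneg _),
    ofReal_norm]
  rfl

lemma one_sub_pow_mem (z : ℂ) (hz : ‖z‖ < 1) (n : ℕ) :
    0 ≤ (1 - ‖z‖^2)^n ∧ (1 - ‖z‖^2)^n ≤ 1 := by
  have h0 : 0 ≤ 1 - ‖z‖^2 := by nlinarith [norm_nonneg z]
  exact ⟨pow_nonneg h0 n, pow_le_one₀ h0 (by nlinarith [norm_nonneg z])⟩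

/-- The factor `|z-λ|²` of `|K(z,w)|²` cancels the singularity of the weight. -/
lemma kernel_bound (lam : ℂ) (hlam : ‖lam‖ = 1) (n : ℕ) (hn : 1 ≤ n) (z w : ℂ)
    (hz : ‖z‖ < 1) (hw : ‖w‖ < 1) :
    ‖Kker lam n z w‖^2 * wgt lam n z ≤
      (((n+1).factorial : ℝ) * ((n-1).factorial : ℝ) * ‖w - lam‖)^2 *
        (1 / ((n.factorial : ℝ) * ((n-1).factorial : ℝ))) / ((1 - ‖w‖)^(n+2))^2 := by
  have hz0 : 0 < ‖z - lam‖ := norm_pos_iff.2 (sub_lam_ne lam hlam z hz)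
  have hD : 1 - ‖w‖ ≤ ‖1 - z * (starRingEnd ℂ) w‖ := by
    have h := le_norm_one_sub z w hz
    rwa [← RCLike.norm_conj (1 - (starRingEnd ℂ) z * w), map_sub, map_mul, map_one, Complex.conj_conj] at h
  have hw0 : 0 < 1 - ‖w‖ := by linarith
  have hD0 : 0 < ‖1 - z * (starRingEnd ℂ) w‖ := by linarith
  have hp := one_sub_pow_mem z hz n
  have hK : ‖Kker lam n z w‖ = ((n+1).factorial : ℝ) * ((n-1).factorial : ℝ) * ‖z - lam‖ *
      ‖w - lam‖ / ‖1 - z * (starRingEnd ℂ) w‖^(n+2) := by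
    rw [Kker, norm_div, norm_mul, norm_mul, norm_mul, norm_pow, ← map_sub, RCLike.norm_conj,
      norm_natCast, norm_natCast]
  rw [hK, wgt_eq lam n hn]
  have e : (((n+1).factorial : ℝ) * ((n-1).factorial : ℝ) * ‖z - lam‖ *
      ‖w - lam‖ / ‖1 - z * (starRingEnd ℂ) w‖^(n+2))^2 *
      ((1 / ((n.factorial : ℝ) * ((n-1).factorial : ℝ))) *
      ((1 - ‖z‖^2)^n / ‖z - lam‖^2)) =
      ((((n+1).factorial : ℝ) * ((n-1).factorial : ℝ) * ‖w - lam‖)^2 *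
        (1 / ((n.factorial : ℝ) * ((n-1).factorial : ℝ))) * (1 - ‖z‖^2)^n) /
        (‖1 - z * (starRingEnd ℂ) w‖^(n+2))^2 := by
    field_simp
  rw [e]
  refine div_le_div₀ (by positivity) (mul_le_of_le_one_right (by positivity) hp.2)
    (by positivity) ?_
  gcongr

lemma nA_restrict (s : Set ℂ) :
    nA.restrict s = (ENNReal.ofReal Real.pi)⁻¹ • volume.restrict s := by
  rw [nA, Measure.restrict_smul]

theorem stmt2 (lam : ℂ) (hlam : lam ∈ sphere (0:ℂ) 1) (n : ℕ) (hn : 1 ≤ n) :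
    -- for each w ∈ 𝔻 the kernel function K(·,w) belongs to A²(dν_{λ,n})
    (∀ w ∈ ball (0:ℂ) 1,
      DifferentiableOn ℂ (fun z => Kker lam n z w) (ball (0:ℂ) 1) ∧
      (∫⁻ z in ball (0:ℂ) 1,
        (‖Kker lam n z w‖₊ : ℝ≥0∞) ^ 2 * ENNReal.ofReal (wgt lam n z) ∂nA) < ⊤) ∧
    -- the reproducing property: ⟨f, K(·,w)⟩ = f(w) for every f ∈ A²(dν_{λ,n})
    (∀ f : ℂ → ℂ, DifferentiableOn ℂ f (ball (0:ℂ) 1) →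
      (∫⁻ z in ball (0:ℂ) 1,
        (‖f z‖₊ : ℝ≥0∞) ^ 2 * ENNReal.ofReal (wgt lam n z) ∂nA) < ⊤ →
      ∀ w ∈ ball (0:ℂ) 1,
        (∫ z in ball (0:ℂ) 1,
          f z * (starRingEnd ℂ) (Kker lam n z w) * ((wgt lam n z : ℝ) : ℂ) ∂nA) = f w) := by
  have hpi := Real.pi_pos
  have hl : ‖lam‖ = 1 := by simpa using hlam
  have hpi0 : (ENNReal.ofReal Real.pi)⁻¹ ≠ 0 := by simp
  have hpiT : (ENNReal.ofReal Real.pi)⁻¹ ≠ ⊤ := by simp [hpi]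
  refine ⟨fun w hw => ⟨?_, ?_⟩, fun f hf hfi w hw => ?_⟩
  · have hw' : ‖w‖ < 1 := by simpa using hw
    simp only [Kker]
    refine DifferentiableOn.div (by fun_prop) (by fun_prop) ?_
    intro z hz
    apply pow_ne_zero
    rw [mul_comm]
    exact one_sub_conj_mul_ne w z hw' (by simpa using hz)
  · have hw' : ‖w‖ < 1 := by simpa using hw
    rw [nA_restrict, lintegral_smul_measure]
    refine ENNReal.mul_lt_top hpiT.lt_top ?_
    refine lt_of_le_of_lt (setLIntegral_mono' isOpen_ball.measurableSet (fun z hz =>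
      (coe_integrand (fun z => Kker lam n z w) lam n z).trans_le (ENNReal.ofReal_le_ofReal
        (kernel_bound lam hl n hn z w (by simpa using hz) hw')))) ?_
    rw [setLIntegral_const]
    exact ENNReal.mul_lt_top ENNReal.ofReal_lt_top measure_ball_lt_top
  · have hw' : ‖w‖ < 1 := by simpa using hw
    have hw0 : 0 < 1 - ‖w‖ := by linarith
    have hne : ∀ z ∈ ball (0:ℂ) 1, z - lam ≠ 0 := fun z hz =>
      sub_lam_ne lam hl z (by simpa using hz)
    have hfact : (0:ℝ) < (n.factorial : ℝ) * ((n-1).factorial : ℝ) := by positivity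
    set c : ℝ := (n.factorial : ℝ) * ((n-1).factorial : ℝ) with hc
    have hg : DifferentiableOn ℂ (fun z => f z / (z - lam)) (ball (0:ℂ) 1) :=
      hf.div (by fun_prop) hne
    have hwc : ContinuousOn (fun z => wgt lam n z) (ball (0:ℂ) 1) := by
      simp only [wgt_eq lam n hn]
      refine continuousOn_const.mul (ContinuousOn.div (by fun_prop) (by fun_prop) ?_)
      intro z hz
      exact pow_ne_zero _ (norm_ne_zero_iff.2 (hne z hz))
    have hL2 : IntegrableOn (fun z => ‖f z‖^2 * wgt lam n z) (ball (0:ℂ) 1) volume := by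
      refine ⟨((hf.continuousOn.norm.pow 2).mul hwc).aestronglyMeasurable
        isOpen_ball.measurableSet, ?_⟩
      rw [nA_restrict, lintegral_smul_measure] at hfi
      have h := ENNReal.lt_top_of_mul_ne_top_right hfi.ne hpi0
      simp only [coe_integrand] at h
      rw [hasFiniteIntegral_iff_enorm]
      refine lt_of_le_of_lt (le_of_eq (setLIntegral_congr_fun isOpen_ball.measurableSet ?_)) h
      intro z hz
      exact Real.enorm_eq_ofReal
        (mul_nonneg (by positivity) (wgt_nonneg lam n hn z (by simpa using hz)))
    -- `L²` with respect to the finite measure `(1-|z|²)^n dA` implies `L¹`.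
    have hi : IntegrableOn (fun z => (f z / (z - lam)) * (1 - (‖z‖:ℂ)^2)^n /
        (1 - (starRingEnd ℂ) z * w)^(n+2)) (ball (0:ℂ) 1) volume := by
      have hdom : IntegrableOn (fun z => (1 + c * (‖f z‖^2 * wgt lam n z)) / (1 - ‖w‖)^(n+2))
          (ball (0:ℂ) 1) volume :=
        (Integrable.add (integrableOn_const measure_ball_lt_top.ne)
          (hL2.const_mul c)).div_const _
      refine Integrable.mono' hdom ?_ ?_
      · refine ContinuousOn.aestronglyMeasurable ?_ isOpen_ball.measurableSet
        refine ContinuousOn.div (hg.continuousOn.mul (by fun_prop)) (by fun_prop) ?_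
        intro z hz
        exact pow_ne_zero _ (one_sub_conj_mul_ne z w (by simpa using hz) hw')
      · refine (ae_restrict_iff' isOpen_ball.measurableSet).2 (Filter.Eventually.of_forall ?_)
        intro z hz
        have hz' : ‖z‖ < 1 := by simpa using hz
        have hz0 : 0 < ‖z - lam‖ := norm_pos_iff.2 (hne z hz)
        have hp := one_sub_pow_mem z hz' n
        have hD := le_norm_one_sub z w hz'
        have hnm : ‖(1 - (‖z‖:ℂ)^2)^n‖ = (1 - ‖z‖^2)^n := by
          have : (1 - (‖z‖:ℂ)^2)^n = (((1 - ‖z‖^2)^n : ℝ) : ℂ) := by push_cast; rfl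
          rw [this, norm_real, Real.norm_of_nonneg hp.1]
        rw [norm_div, norm_mul, norm_div, hnm, norm_pow, wgt_eq lam n hn, ← hc]
        have e : c * (‖f z‖^2 * (1 / c * ((1 - ‖z‖^2)^n / ‖z - lam‖^2))) =
            (‖f z‖ / ‖z - lam‖)^2 * (1 - ‖z‖^2)^n := by
          field_simp
        rw [e]
        have hq : 0 ≤ ‖f z‖ / ‖z - lam‖ := by positivity
        set q := ‖f z‖ / ‖z - lam‖
        set p := (1 - ‖z‖^2)^n
        have hqp : q * p ≤ 1 + q^2 * p := by
          nlinarith [mul_nonneg hp.1 (sq_nonneg (q - 1)), mul_nonneg hp.1 (sq_nonneg q),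
            mul_nonneg hp.1 hq]
        have := mul_nonneg (sq_nonneg q) hp.1
        gcongr
    have main := weighted_reproducing _ hg w hw' n hi
    have hcongr : ∀ z ∈ ball (0:ℂ) 1,
        f z * (starRingEnd ℂ) (Kker lam n z w) * ((wgt lam n z : ℝ) : ℂ) =
        ((n+1) * (w - lam)) * ((f z / (z - lam)) * (1 - (‖z‖:ℂ)^2)^n /
        (1 - (starRingEnd ℂ) z * w)^(n+2)) := by
      intro z hz
      have h1 := hne z hz
      have h2 := one_sub_conj_mul_ne z w (by simpa using hz) hw'
      have h3 : (starRingEnd ℂ) z - (starRingEnd ℂ) lam ≠ 0 := by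
        rw [← map_sub]
        exact (map_ne_zero _).2 h1
      have hsq : (‖z - lam‖:ℂ)^2 = (z - lam) * ((starRingEnd ℂ) z - (starRingEnd ℂ) lam) := by
        rw [← map_sub, mul_conj']
      have f1 : (n.factorial : ℂ) ≠ 0 := by exact_mod_cast n.factorial_ne_zero
      have f2 : ((n-1).factorial : ℂ) ≠ 0 := by exact_mod_cast (n-1).factorial_ne_zero
      rw [wgt_eq lam n hn, Kker, Nat.factorial_succ]
      push_cast
      simp only [map_div₀, map_mul, map_sub, map_pow, map_one, map_add, map_natCast,
        Complex.conj_conj]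
      rw [hsq]
      field_simp
    rw [nA_restrict, integral_smul_measure, setIntegral_congr_fun isOpen_ball.measurableSet hcongr,
      integral_const_mul, main, ENNReal.toReal_inv, ENNReal.toReal_ofReal hpi.le, real_smul]
    have hn1 : (n:ℂ) + 1 ≠ 0 := by exact_mod_cast n.succ_ne_zero
    have hwl := hne w hw
    have hpc : (Real.pi : ℂ) ≠ 0 := by exact_mod_cast hpi.ne'
    push_cast
    field_simp
end

section
/- Let n ≥ 1 be an integer and μ a finite non-negative Borel measure on 𝕋. Then for any holomorphic f on 𝔻 and any 0 ≤ r < 1, the dilation f_r(z) := f(rz) satisfies D_{μ,n}(f_r) ≤ (4^{n-1}(2-r) r^{2n}/(1+r)^{2n-2}) · D_{μ,n}(f). -/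
/-!
The estimate reduces to a point mass: by Tonelli, `D_{μ,n}(f)` is an average over `ζ ∈ 𝕋` of
`∫ |g|² (1-|z|²)ⁿ / |z-ζ|² dA` with `g = f⁽ⁿ⁾`, and `f_r⁽ⁿ⁾(z) = rⁿ g(rz)`. So it suffices to compare,
for each `ζ`, the integrals belonging to `g(rz)` and to `g(z)` (`point_mass_ineq`).

With `w = ζ⁻¹` put `h(z) = g(z) / (1 - wz) = ∑ a_k z^k`. Then `g(rz) / (1 - wz)` equals
`r h(rz) + (1-r) h(rz) / (1 - wz)`, whose `k`-th coefficient is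
`r^{k+1} a_k + (1-r) ∑_{i+j=k} w^i r^j a_j`. The moduli of the weights add up to one, so by convexity
its squared modulus is at most `r^{k+1} |a_k|² + (1-r) ∑_{j≤k} r^j |a_j|²` (`norm_sq_coeff_le`).

Both integrals are diagonal in the coefficients (`bergman_norm`), with radial moments
`β_k = ∫₀¹ ρ^{2k} (1-ρ²)ⁿ ρ dρ`. Exchanging the order of summation leaves the factor
`r^j (r β_j + (1-r) ∑_{k≥j} β_k)` in front of `|a_j|²`. The tail `∑_{k≥j} β_k` is the moment with
`n - 1` in place of `n`, which integration by parts bounds by `(j+2) β_j`, and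
`r^j (r + (1-r)(j+2)) ≤ 2 - r` because the left side decreases in `j`.

This gives the constant `(2-r) r^{2n}`, which is at most the stated one since `1 + r ≤ 2`.
-/

open MeasureTheory Metric Complex
open scoped ENNReal NNReal

/-- The Poisson integral of the measure `μ`:
`P_μ(z) = ∫_𝕋 (1-|z|²)/|z-ζ|² dμ(ζ)`. -/
noncomputable def Pmu (μ : Measure ℂ) (z : ℂ) : ℝ≥0∞ :=
  ∫⁻ ζ, ENNReal.ofReal ((1 - ‖z‖^2) / ‖z - ζ‖^2) ∂μ

/-- The weighted Dirichlet-type integral of order `n`: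
`D_{μ,n}(f) = (1/(n!(n-1)!)) ∫_𝔻 |f⁽ⁿ⁾(z)|² P_μ(z) (1-|z|²)^{n-1} dA(z)`. -/
noncomputable def Dmu (n : ℕ) (μ : Measure ℂ) (f : ℂ → ℂ) : ℝ≥0∞ :=
  ENNReal.ofReal (1 / ((n.factorial : ℝ) * ((n-1).factorial : ℝ))) *
    ∫⁻ z in ball (0:ℂ) 1, (‖iteratedDeriv n f z‖₊ : ℝ≥0∞) ^ 2 * Pmu μ z *
      ENNReal.ofReal ((1 - ‖z‖^2)^(n-1)) ∂nA


open Finset.HasAntidiagonal (antidiagonal)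

/-! ### Parseval on circles -/

/-- Parseval's identity on the circle for an absolutely summable one-sided Fourier series. -/
lemma parseval_circle (d : ℕ → ℂ) (hd : Summable fun k => ‖d k‖) :
    ∫⁻ θ in Set.Ioo (-Real.pi) Real.pi, ‖∑' k, d k * exp (θ * I) ^ k‖ₑ ^ 2
      = ENNReal.ofReal (2 * Real.pi) * ∑' k, ‖d k‖ₑ ^ 2 := by
  have hT : Fact (0 < 2 * Real.pi) := ⟨by positivity⟩
  set u : ℕ → C(AddCircle (2 * Real.pi), ℂ) := fun k => d k • fourier (k : ℤ) with hu
  have hus : Summable u := by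
    refine Summable.of_norm_bounded hd fun k => ?_
    rw [hu]; simp [norm_smul, fourier_norm]
  set Φ := ∑' k, u k with hΦ
  have hval : ∀ θ : ℝ, Φ (θ : AddCircle (2 * Real.pi)) = ∑' k, d k * exp (θ * I) ^ k := by
    intro θ
    rw [hΦ, ← ContinuousMap.tsum_apply hus]
    refine tsum_congr fun k => ?_
    simp only [hu, ContinuousMap.smul_apply, smul_eq_mul, fourier_coe_apply]
    rw [← Complex.exp_nat_mul]
    congr 2
    have : (Real.pi : ℂ) ≠ 0 := by exact_mod_cast Real.pi_ne_zero
    push_cast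
    field_simp
  set L := ContinuousMap.toLp (E := ℂ) 2 (AddCircle.haarAddCircle (T := 2 * Real.pi)) ℂ with hL
  have hsum : HasSum (fun k : ℕ => d k • fourierLp (T := 2 * Real.pi) 2 (k : ℤ)) (L Φ) := by
    have := hus.hasSum.mapL L
    simpa [hu, fourierLp, hL] using this
  have horth : Orthonormal ℂ (fun k : ℕ => fourierLp (T := 2 * Real.pi) 2 (k : ℤ)) :=
    orthonormal_fourier.comp _ Nat.cast_injective
  -- the squared norms of the partial sums converge to the squared norm of the sum
  have hnorm : HasSum (fun k => ‖d k‖ ^ 2) (‖L Φ‖ ^ 2) := by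
    have h1 := (hsum.norm.pow 2 : Filter.Tendsto _ _ _)
    refine h1.congr fun s => ?_
    rw [← inner_self_eq_norm_sq (𝕜 := ℂ), horth.inner_sum]
    rw [map_sum]
    refine Finset.sum_congr rfl fun k _ => ?_
    rw [Complex.conj_mul']
    norm_cast
  have hint : ‖L Φ‖ₑ ^ 2 = ∫⁻ x, ‖Φ x‖ₑ ^ 2 ∂(AddCircle.haarAddCircle (T := 2 * Real.pi)) := by
    rw [Lp.enorm_def, eLpNorm_congr_ae (ContinuousMap.coeFn_toLp _ _),
      eLpNorm_eq_lintegral_rpow_enorm_toReal (by simp) (by simp)]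
    rw [← ENNReal.rpow_natCast, ← ENNReal.rpow_mul]
    simp
  have henorm : ‖L Φ‖ₑ ^ 2 = ∑' k, ‖d k‖ₑ ^ 2 := by
    have e : ∀ {E : Type} [NormedAddCommGroup E] (x : E), ‖x‖ₑ ^ 2 = ENNReal.ofReal (‖x‖ ^ 2) := by
      intro E _ x
      rw [ENNReal.ofReal_pow (norm_nonneg _), ofReal_norm]
    rw [e, ← hnorm.tsum_eq, ENNReal.ofReal_tsum_of_nonneg (fun _ => by positivity) hnorm.summable]
    simp_rw [e]
  rw [← henorm, hint, ← smul_eq_mul, ← lintegral_smul_measure,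
    ← AddCircle.volume_eq_smul_haarAddCircle, ← AddCircle.lintegral_preimage (2 * Real.pi) (-Real.pi)]
  rw [restrict_Ioo_eq_restrict_Ioc, show -Real.pi + 2 * Real.pi = Real.pi by ring]
  simp_rw [hval]

lemma circle_mean_sq {F : ℂ → ℂ} {c : ℕ → ℂ}
    (h : ∀ z ∈ ball (0 : ℂ) 1, HasSum (fun k => c k * z ^ k) (F z)) {ρ : ℝ}
    (hρ : ρ ∈ Set.Ioo (0 : ℝ) 1) :
    ∫⁻ θ in Set.Ioo (-Real.pi) Real.pi, ‖F (ρ * (Real.cos θ + Real.sin θ * I))‖ₑ ^ 2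
      = ENNReal.ofReal (2 * Real.pi) * ∑' k, ‖c k‖ₑ ^ 2 * ENNReal.ofReal (ρ ^ (2 * k)) := by
  have key := parseval_circle (fun k => c k * (ρ : ℂ) ^ k) (h ρ (by
    simpa [abs_of_pos hρ.1] using hρ.2)).summable.norm
  convert key using 3 with θ k
  · congr 2
    have hexp : (ρ * (Real.cos θ + Real.sin θ * I) : ℂ) = ρ * exp (θ * I) := by
      rw [Complex.exp_mul_I]; push_cast; ring
    rw [hexp, ← (h (ρ * exp (θ * I)) (by
      simpa [Complex.norm_exp_ofReal_mul_I, abs_of_pos hρ.1] using hρ.2)).tsum_eq]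
    simp only [mul_pow, mul_assoc]
  · ext k
    rw [enorm_mul, mul_pow, enorm_pow, ← pow_mul, mul_comm k 2, pow_mul, pow_mul]
    congr 1
    rw [ENNReal.ofReal_pow (by positivity), ENNReal.ofReal_pow hρ.1.le]
    congr 2
    rw [← ofReal_norm]; simp [abs_of_pos hρ.1]

/-! ### Radial moments -/

/-- The radial moment `∫₀¹ ρ^{2k} (1-ρ²)ⁿ ρ dρ`. -/
noncomputable def radialMoment (n k : ℕ) : ℝ := ∫ ρ in (0 : ℝ)..1, ρ ^ (2 * k) * (1 - ρ ^ 2) ^ n * ρ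

lemma radialMoment_eq_lintegral (n k : ℕ) :
    ENNReal.ofReal (radialMoment n k) =
      ∫⁻ ρ in Set.Ioo (0 : ℝ) 1, ENNReal.ofReal (ρ ^ (2 * k) * (1 - ρ ^ 2) ^ n * ρ) := by
  rw [radialMoment, intervalIntegral.integral_of_le zero_le_one, ← integral_Ioc_eq_integral_Ioo.symm,
    ofReal_integral_eq_lintegral_ofReal]
  · exact (Continuous.integrableOn_Icc (by fun_prop)).mono_set Set.Ioo_subset_Icc_self
  · filter_upwards [ae_restrict_mem measurableSet_Ioo] with ρ hρ
    have : 0 ≤ 1 - ρ ^ 2 := by nlinarith [hρ.1, hρ.2]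
    have := hρ.1
    positivity

/-- Integration by parts: since `ρ^{2(j+1)} (1-ρ²)^{m+1}` vanishes at both endpoints,
`(j+1) β_{m+1,j} = (m+1) β_{m,j+1}`, while `β_{m,j} = β_{m+1,j} + β_{m,j+1}`. -/
lemma radialMoment_le (m j : ℕ) :
    radialMoment m j ≤ (j + 2) * radialMoment (m + 1) j := by
  have hii : ∀ n k, IntervalIntegrable (fun ρ : ℝ => ρ ^ (2 * k) * (1 - ρ ^ 2) ^ n * ρ) volume 0 1 :=
    fun n k => Continuous.intervalIntegrable (by fun_prop) _ _
  have hpos : 0 ≤ radialMoment (m + 1) j := by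
    refine intervalIntegral.integral_nonneg zero_le_one fun ρ hρ => ?_
    have : 0 ≤ 1 - ρ ^ 2 := by nlinarith [hρ.1, hρ.2]
    have := hρ.1
    positivity
  have h1 : radialMoment m j = radialMoment (m + 1) j + radialMoment m (j + 1) := by
    unfold radialMoment
    rw [← intervalIntegral.integral_add (hii _ _) (hii _ _)]
    congr 1; ext ρ; ring
  have h2 : (j + 1) * radialMoment (m + 1) j - (m + 1) * radialMoment m (j + 1) = 0 := by
    have hder : ∀ ρ ∈ Set.uIcc (0 : ℝ) 1,
        HasDerivAt (fun ρ : ℝ => ρ ^ (2 * (j + 1)) * (1 - ρ ^ 2) ^ (m + 1) / 2)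
          ((j + 1) * (ρ ^ (2 * j) * (1 - ρ ^ 2) ^ (m + 1) * ρ)
            - (m + 1) * (ρ ^ (2 * (j + 1)) * (1 - ρ ^ 2) ^ m * ρ)) ρ := by
      intro ρ _
      have := ((hasDerivAt_pow (2 * (j + 1)) ρ).fun_mul
        (((hasDerivAt_pow 2 ρ).const_sub 1).fun_pow (m + 1))).div_const 2
      refine this.congr_deriv ?_
      rw [show 2 * (j + 1) - 1 = 2 * j + 1 by omega, Nat.add_sub_cancel]
      push_cast
      ring
    have := intervalIntegral.integral_eq_sub_of_hasDerivAt hder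
      (Continuous.intervalIntegrable (by fun_prop) _ _)
    rw [intervalIntegral.integral_sub ((hii _ _).const_mul _) ((hii _ _).const_mul _),
      intervalIntegral.integral_const_mul, intervalIntegral.integral_const_mul] at this
    simpa [radialMoment] using this
  have hpos' : 0 ≤ radialMoment m (j + 1) := by
    refine intervalIntegral.integral_nonneg zero_le_one fun ρ hρ => ?_
    have : 0 ≤ 1 - ρ ^ 2 := by nlinarith [hρ.1, hρ.2]
    have := hρ.1
    positivity
  have hm : (0 : ℝ) ≤ m := Nat.cast_nonneg m
  nlinarith [mul_nonneg hm hpos']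

/-- Summing a geometric series in `ρ²` under the integral lowers the exponent of `1-ρ²` by one. -/
lemma tsum_radialMoment (m j : ℕ) :
    ∑' i, ENNReal.ofReal (radialMoment (m + 1) (i + j)) = ENNReal.ofReal (radialMoment m j) := by
  simp_rw [radialMoment_eq_lintegral]
  rw [← lintegral_tsum (fun i => by fun_prop)]
  refine setLIntegral_congr_fun measurableSet_Ioo fun ρ hρ => ?_
  have h1 : ρ ^ 2 < 1 := by nlinarith [hρ.1, hρ.2]
  have h0 : 0 ≤ 1 - ρ ^ 2 := by linarith
  have hρ0 := hρ.1
  have hs := (hasSum_geometric_of_lt_one (sq_nonneg ρ) h1).mul_right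
    (ρ ^ (2 * j) * (1 - ρ ^ 2) ^ (m + 1) * ρ)
  have hs' : HasSum (fun i : ℕ => ρ ^ (2 * (i + j)) * (1 - ρ ^ 2) ^ (m + 1) * ρ)
      (ρ ^ (2 * j) * (1 - ρ ^ 2) ^ m * ρ) := by
    have hne : 1 - ρ ^ 2 ≠ 0 := by linarith
    have e : ρ ^ (2 * j) * (1 - ρ ^ 2) ^ m * ρ
        = (1 - ρ ^ 2)⁻¹ * (ρ ^ (2 * j) * (1 - ρ ^ 2) ^ (m + 1) * ρ) := by
      rw [pow_succ (1 - ρ ^ 2) m]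
      field_simp
    rw [e]
    exact hs.congr_fun fun i => by ring
  rw [← ENNReal.ofReal_tsum_of_nonneg (fun i => by positivity) hs'.summable, hs'.tsum_eq]

/-! ### Weighted Bergman norms -/

/-- The weighted Bergman norm of a power series is diagonal in its coefficients. The area measure
is not normalized here, hence the factor `2π`. -/
lemma bergman_norm {F : ℂ → ℂ} (hF : Measurable F) {c : ℕ → ℂ}
    (h : ∀ z ∈ ball (0 : ℂ) 1, HasSum (fun k => c k * z ^ k) (F z)) (n : ℕ) :
    ∫⁻ z in ball (0 : ℂ) 1, ‖F z‖ₑ ^ 2 * ENNReal.ofReal ((1 - ‖z‖ ^ 2) ^ n)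
      = ENNReal.ofReal (2 * Real.pi) * ∑' k, ‖c k‖ₑ ^ 2 * ENNReal.ofReal (radialMoment n k) := by
  have hG : Measurable ((ball (0 : ℂ) 1).indicator
      fun z => ‖F z‖ₑ ^ 2 * ENNReal.ofReal ((1 - ‖z‖ ^ 2) ^ n)) :=
    Measurable.indicator (by fun_prop) measurableSet_ball
  have hP : Measurable fun p : ℝ × ℝ => (p.1 * (Real.cos p.2 + Real.sin p.2 * I) : ℂ) := by fun_prop
  rw [← lintegral_indicator measurableSet_ball, ← Complex.lintegral_comp_polarCoord_symm]
  rw [polarCoord_target, Measure.volume_eq_prod, ← Measure.prod_restrict,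
    lintegral_prod _ (by
      refine Measurable.aemeasurable ?_
      simp only [Complex.polarCoord_symm_apply]
      exact (ENNReal.measurable_ofReal.comp measurable_fst).mul (hG.comp hP))]
  have hcirc : ∀ ρ ∈ Set.Ioi (0 : ℝ), ∫⁻ θ in Set.Ioo (-Real.pi) Real.pi, ENNReal.ofReal ρ •
      (ball (0 : ℂ) 1).indicator (fun z => ‖F z‖ₑ ^ 2 * ENNReal.ofReal ((1 - ‖z‖ ^ 2) ^ n))
        (Complex.polarCoord.symm (ρ, θ)) = (Set.Ioo (0 : ℝ) 1).indicator (fun ρ =>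
          ENNReal.ofReal (2 * Real.pi) * ∑' k, ‖c k‖ₑ ^ 2 *
            ENNReal.ofReal (ρ ^ (2 * k) * (1 - ρ ^ 2) ^ n * ρ)) ρ := by
    intro ρ hρ
    have hρ : 0 < ρ := hρ
    have hn : ∀ θ, ‖Complex.polarCoord.symm (ρ, θ)‖ = ρ := fun θ => by
      rw [Complex.norm_polarCoord_symm, abs_of_pos hρ]
    by_cases h1 : ρ < 1
    · have hmem : ρ ∈ Set.Ioo (0 : ℝ) 1 := ⟨hρ, h1⟩
      have hw : 0 ≤ 1 - ρ ^ 2 := by nlinarith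
      rw [Set.indicator_of_mem hmem]
      have : ∀ θ, (ball (0 : ℂ) 1).indicator
          (fun z => ‖F z‖ₑ ^ 2 * ENNReal.ofReal ((1 - ‖z‖ ^ 2) ^ n))
          (Complex.polarCoord.symm (ρ, θ)) =
          ‖F (ρ * (Real.cos θ + Real.sin θ * I))‖ₑ ^ 2 * ENNReal.ofReal ((1 - ρ ^ 2) ^ n) := by
        intro θ
        rw [Set.indicator_of_mem (by rw [mem_ball_zero_iff, hn]; exact h1), hn,
          Complex.polarCoord_symm_apply]
      simp_rw [this, smul_eq_mul]
      rw [lintegral_const_mul _ (by fun_prop), lintegral_mul_const _ (by fun_prop),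
        circle_mean_sq h hmem, mul_assoc, mul_left_comm, ← ENNReal.tsum_mul_right,
        ← ENNReal.tsum_mul_left]
      congr 1
      refine tsum_congr fun k => ?_
      rw [ENNReal.ofReal_mul (by positivity), ENNReal.ofReal_mul (by positivity)]
      ring
    · rw [Set.indicator_of_notMem (fun hm => h1 hm.2)]
      have : ∀ θ, (ball (0 : ℂ) 1).indicator
          (fun z => ‖F z‖ₑ ^ 2 * ENNReal.ofReal ((1 - ‖z‖ ^ 2) ^ n))
          (Complex.polarCoord.symm (ρ, θ)) = 0 := fun θ =>
        Set.indicator_of_notMem (by rw [mem_ball_zero_iff, hn]; exact h1) _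
      simp_rw [this]; simp
  rw [setLIntegral_congr_fun measurableSet_Ioi hcirc, setLIntegral_indicator measurableSet_Ioo,
    Set.inter_eq_left.mpr Set.Ioo_subset_Ioi_self, lintegral_const_mul _ (by fun_prop),
    lintegral_tsum (fun k => by fun_prop)]
  congr 1
  refine tsum_congr fun k => ?_
  rw [lintegral_const_mul _ (by fun_prop), radialMoment_eq_lintegral]

/-! ### The coefficient estimate -/

/-- Convexity of the squared norm, applied to the coefficients of
`r h(rz) + (1-r) h(rz) / (1 - wz)` with `h = ∑ a_k z^k`. -/
lemma norm_sq_coeff_le {r : ℝ} (hr0 : 0 ≤ r) (hr1 : r < 1) {w : ℂ} (hw : ‖w‖ = 1) (a : ℕ → ℂ)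
    (k : ℕ) :
    ‖(r : ℂ) * (r ^ k * a k) + (1 - r) * ∑ p ∈ antidiagonal k, w ^ p.1 * (r ^ p.2 * a p.2)‖ ^ 2
      ≤ r ^ (k + 1) * ‖a k‖ ^ 2 + (1 - r) * ∑ p ∈ antidiagonal k, r ^ p.2 * ‖a p.2‖ ^ 2 := by
  have hr : 0 ≤ 1 - r := by linarith
  set B := ∑ p ∈ antidiagonal k, r ^ p.2 * ‖a p.2‖ with hB
  set Q := ∑ p ∈ antidiagonal k, r ^ p.2 * ‖a p.2‖ ^ 2 with hQ
  set W := ∑ p ∈ antidiagonal k, r ^ p.2 with hW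
  -- the weights add up to one
  have hsum : r ^ (k + 1) + (1 - r) * W = 1 := by
    have : W = ∑ i ∈ Finset.range (k + 1), r ^ i := by
      rw [hW, ← Finset.Nat.sum_antidiagonal_swap,
        Finset.Nat.sum_antidiagonal_eq_sum_range_succ_mk]
      rfl
    rw [this, mul_neg_geom_sum]
    ring
  have hB0 : 0 ≤ B := Finset.sum_nonneg fun p _ => by positivity
  have hW0 : 0 < W := by
    have : 0 < (1 - r) * W := by
      have : r ^ (k + 1) < 1 := pow_lt_one₀ hr0 hr1 (Nat.succ_ne_zero k)
      linarith
    exact pos_of_mul_pos_right this hr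
  have hcs : B ^ 2 ≤ W * Q := by
    refine Finset.sum_sq_le_sum_mul_sum_of_sq_le_mul _ (fun p _ => by positivity)
      (fun p _ => by positivity) fun p _ => by apply le_of_eq; ring
  have htri : ‖(r : ℂ) * (r ^ k * a k) +
      (1 - r) * ∑ p ∈ antidiagonal k, w ^ p.1 * (r ^ p.2 * a p.2)‖
      ≤ r ^ (k + 1) * ‖a k‖ + (1 - r) * B := by
    refine (norm_add_le _ _).trans (add_le_add (le_of_eq ?_) ?_)
    · simp [abs_of_nonneg hr0]; ring
    · rw [norm_mul]
      have : ‖(1 - r : ℂ)‖ = 1 - r := by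
        rw [← ofReal_one, ← ofReal_sub, norm_real, Real.norm_of_nonneg hr]
      rw [this]
      refine mul_le_mul_of_nonneg_left ((norm_sum_le _ _).trans (le_of_eq ?_)) hr
      exact Finset.sum_congr rfl fun p _ => by simp [hw, abs_of_nonneg hr0]
  refine (pow_le_pow_left₀ (norm_nonneg _) htri 2).trans ?_
  -- `b` is the `r^j`-weighted mean of the `‖a j‖`
  obtain ⟨b, hb⟩ : ∃ b, B = W * b := ⟨B / W, by field_simp⟩
  have hQb : W * b ^ 2 ≤ Q := by
    rw [hb] at hcs
    nlinarith
  have hp : 0 ≤ r ^ (k + 1) := by positivity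
  set p := r ^ (k + 1)
  have hq : 0 ≤ (1 - r) * W := by positivity
  calc (p * ‖a k‖ + (1 - r) * B) ^ 2 = (p * ‖a k‖ + (1 - r) * W * b) ^ 2 := by rw [hb]; ring
    _ ≤ p * ‖a k‖ ^ 2 + (1 - r) * W * b ^ 2 := by
      have e : (1 - r) * W = 1 - p := by linarith
      rw [e] at hq ⊢
      nlinarith [mul_nonneg (mul_nonneg hp hq) (sq_nonneg (‖a k‖ - b))]
    _ ≤ p * ‖a k‖ ^ 2 + (1 - r) * Q := by
      rw [mul_assoc]; gcongr

/-- The left side is decreasing in `j`, with value `2 - r` at `j = 0`. -/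
lemma pow_mul_le {r : ℝ} (hr0 : 0 ≤ r) (j : ℕ) :
    r ^ j * (r + (1 - r) * (j + 2)) ≤ 2 - r := by
  induction j with
  | zero => norm_num; linarith
  | succ j ih =>
    refine le_trans ?_ ih
    rw [pow_succ, mul_assoc]
    refine mul_le_mul_of_nonneg_left ?_ (by positivity)
    push_cast
    nlinarith [mul_nonneg (by positivity : (0 : ℝ) ≤ j + 2) (sq_nonneg (1 - r))]

lemma radialMoment_nonneg (n k : ℕ) : 0 ≤ radialMoment n k := by
  refine intervalIntegral.integral_nonneg zero_le_one fun ρ hρ => ?_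
  have : 0 ≤ 1 - ρ ^ 2 := by nlinarith [hρ.1, hρ.2]
  have := hρ.1
  positivity

lemma sum_coeff_le {r : ℝ} (hr0 : 0 ≤ r) (hr1 : r < 1) {w : ℂ} (hw : ‖w‖ = 1) (a : ℕ → ℂ)
    (m : ℕ) :
    ∑' k, ‖(r : ℂ) * (r ^ k * a k) +
        (1 - r) * ∑ p ∈ antidiagonal k, w ^ p.1 * (r ^ p.2 * a p.2)‖ₑ ^ 2
          * ENNReal.ofReal (radialMoment (m + 1) k)
      ≤ ENNReal.ofReal (2 - r) * ∑' k, ‖a k‖ₑ ^ 2 * ENNReal.ofReal (radialMoment (m + 1) k) := by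
  have hr : 0 ≤ 1 - r := by linarith
  have e : ∀ x : ℂ, ‖x‖ₑ ^ 2 = ENNReal.ofReal (‖x‖ ^ 2) := fun x => by
    rw [ENNReal.ofReal_pow (norm_nonneg _), ofReal_norm]
  set β : ℕ → ℝ := radialMoment (m + 1) with hβ
  have hβ0 : ∀ k, 0 ≤ β k := radialMoment_nonneg _
  calc _ ≤ ∑' k, (ENNReal.ofReal (r ^ (k + 1)) * ‖a k‖ₑ ^ 2 * ENNReal.ofReal (β k) +
        ENNReal.ofReal (1 - r) * ∑ p ∈ antidiagonal k,
          ENNReal.ofReal (r ^ p.2) * ‖a p.2‖ₑ ^ 2 * ENNReal.ofReal (β (p.1 + p.2))) := by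
        refine ENNReal.tsum_le_tsum fun k => ?_
        have hs : ∑ p ∈ antidiagonal k,
            ENNReal.ofReal (r ^ p.2) * ‖a p.2‖ₑ ^ 2 * ENNReal.ofReal (β (p.1 + p.2)) =
            ENNReal.ofReal (∑ p ∈ antidiagonal k, r ^ p.2 * ‖a p.2‖ ^ 2) *
              ENNReal.ofReal (β k) := by
          rw [ENNReal.ofReal_sum_of_nonneg (fun p _ => by positivity), Finset.sum_mul]
          refine Finset.sum_congr rfl fun p hp => ?_
          rw [Finset.HasAntidiagonal.mem_antidiagonal.mp hp, e, ENNReal.ofReal_mul (by positivity)]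
        rw [hs, ← mul_assoc (ENNReal.ofReal (1 - r)), ← add_mul, e, e,
          ← ENNReal.ofReal_mul (p := r ^ (k + 1)) (by positivity), ← ENNReal.ofReal_mul hr, ← ENNReal.ofReal_add (by positivity)
            (mul_nonneg hr (Finset.sum_nonneg fun p _ => by positivity))]
        gcongr
        exact norm_sq_coeff_le hr0 hr1 hw a k
    _ = ∑' j, ‖a j‖ₑ ^ 2 * (ENNReal.ofReal (r ^ (j + 1)) * ENNReal.ofReal (β j) +
          ENNReal.ofReal (1 - r) * ENNReal.ofReal (r ^ j) *
            ENNReal.ofReal (radialMoment m j)) := by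
        rw [ENNReal.tsum_add, ENNReal.tsum_mul_left]
        have hswap : ∑' k, ∑ p ∈ antidiagonal k,
            ENNReal.ofReal (r ^ p.2) * ‖a p.2‖ₑ ^ 2 * ENNReal.ofReal (β (p.1 + p.2)) =
            ∑' j, ENNReal.ofReal (r ^ j) * ‖a j‖ₑ ^ 2 * ENNReal.ofReal (radialMoment m j) := by
          have hK : ∀ j, ENNReal.ofReal (r ^ j) * ‖a j‖ₑ ^ 2 * ENNReal.ofReal (radialMoment m j) =
              ∑' i, ENNReal.ofReal (r ^ j) * ‖a j‖ₑ ^ 2 * ENNReal.ofReal (β (i + j)) := fun j => by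
            rw [← tsum_radialMoment, ENNReal.tsum_mul_left]
          simp_rw [hK]
          rw [ENNReal.tsum_comm, ← ENNReal.tsum_prod
            (f := fun i j => ENNReal.ofReal (r ^ j) * ‖a j‖ₑ ^ 2 * ENNReal.ofReal (β (i + j))),
            ← Finset.HasAntidiagonal.sigmaAntidiagonalEquivProd.tsum_eq, ENNReal.tsum_sigma']
          refine tsum_congr fun k => ?_
          rw [tsum_fintype, ← Finset.sum_coe_sort]
          rfl
        rw [hswap, ← ENNReal.tsum_mul_left, ← ENNReal.tsum_add]
        exact tsum_congr fun j => by ring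
    _ ≤ ∑' j, ENNReal.ofReal (2 - r) * (‖a j‖ₑ ^ 2 * ENNReal.ofReal (β j)) := by
        refine ENNReal.tsum_le_tsum fun j => ?_
        rw [mul_left_comm]
        refine mul_le_mul' le_rfl ?_
        have hK0 := radialMoment_nonneg m j
        have := hβ0 j
        rw [← ENNReal.ofReal_mul (by positivity), ← ENNReal.ofReal_mul hr,
          ← ENNReal.ofReal_mul (by positivity), ← ENNReal.ofReal_add (by positivity)
            (by positivity), ← ENNReal.ofReal_mul (by linarith)]
        refine ENNReal.ofReal_le_ofReal ?_
        calc _ ≤ r ^ (j + 1) * β j + (1 - r) * r ^ j * ((j + 2) * β j) := by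
              gcongr; exact radialMoment_le m j
          _ = (r ^ j * (r + (1 - r) * (j + 2))) * β j := by ring
          _ ≤ _ := mul_le_mul_of_nonneg_right (pow_mul_le hr0 j) this
    _ = _ := ENNReal.tsum_mul_left

/-! ### Point masses -/

/-- The dilation inequality for a point mass `ζ` on the circle, for the `n`-th derivative `g`
with `n = m + 1`. -/
lemma point_mass_ineq {g : ℂ → ℂ} (hg : DifferentiableOn ℂ g (ball 0 1)) (hgm : Measurable g)
    {r : ℝ} (hr0 : 0 ≤ r) (hr1 : r < 1) {ζ : ℂ} (hζ : ‖ζ‖ = 1) (m : ℕ) :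
    ∫⁻ z in ball (0 : ℂ) 1, ‖g (r * z)‖ₑ ^ 2 * ENNReal.ofReal ((1 - ‖z‖ ^ 2) / ‖z - ζ‖ ^ 2) *
        ENNReal.ofReal ((1 - ‖z‖ ^ 2) ^ m)
      ≤ ENNReal.ofReal (2 - r) * ∫⁻ z in ball (0 : ℂ) 1, ‖g z‖ₑ ^ 2 *
        ENNReal.ofReal ((1 - ‖z‖ ^ 2) / ‖z - ζ‖ ^ 2) * ENNReal.ofReal ((1 - ‖z‖ ^ 2) ^ m) := by
  have hζ0 : ζ ≠ 0 := by rintro rfl; simp at hζ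
  set w := ζ⁻¹ with hw
  have hw1 : ‖w‖ = 1 := by rw [hw, norm_inv, hζ, inv_one]
  have hne : ∀ z ∈ ball (0 : ℂ) 1, 1 - w * z ≠ 0 := by
    intro z hz h0
    have h1 : ‖w * z‖ = 1 := by rw [← sub_eq_zero.mp h0]; simp
    rw [norm_mul, hw1, one_mul] at h1
    exact absurd h1 (mem_ball_zero_iff.mp hz).ne
  have hdist : ∀ z, ‖z - ζ‖ = ‖1 - w * z‖ := by
    intro z
    have : 1 - w * z = -(w * (z - ζ)) := by rw [hw]; field_simp; ring
    rw [this, norm_neg, norm_mul, hw1, one_mul]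
  have hweight : ∀ G : ℂ → ℂ, ∫⁻ z in ball (0 : ℂ) 1, ‖G z‖ₑ ^ 2 *
      ENNReal.ofReal ((1 - ‖z‖ ^ 2) / ‖z - ζ‖ ^ 2) * ENNReal.ofReal ((1 - ‖z‖ ^ 2) ^ m) =
      ∫⁻ z in ball (0 : ℂ) 1, ‖G z / (1 - w * z)‖ₑ ^ 2 *
        ENNReal.ofReal ((1 - ‖z‖ ^ 2) ^ (m + 1)) := by
    intro G
    refine setLIntegral_congr_fun measurableSet_ball fun z hz => ?_
    have hz1 := mem_ball_zero_iff.mp hz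
    have h0 : 0 ≤ 1 - ‖z‖ ^ 2 := by nlinarith [norm_nonneg z]
    have e : ∀ x : ℂ, ‖x‖ₑ ^ 2 = ENNReal.ofReal (‖x‖ ^ 2) := fun x => by
      rw [ENNReal.ofReal_pow (norm_nonneg _), ofReal_norm]
    rw [e, e, hdist, ← ENNReal.ofReal_mul (by positivity), ← ENNReal.ofReal_mul (by positivity),
      ← ENNReal.ofReal_mul (by positivity), norm_div]
    congr 1
    ring
  rw [hweight fun z => g (r * z), hweight g]
  set h : ℂ → ℂ := fun z => g z / (1 - w * z) with hh
  have hhd : DifferentiableOn ℂ h (ball 0 1) := hg.div (by fun_prop) hne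
  set a : ℕ → ℂ := fun k => (k.factorial : ℂ)⁻¹ * iteratedDeriv k h 0 with ha
  have hsum : ∀ z ∈ ball (0 : ℂ) 1, HasSum (fun k => a k * z ^ k) (h z) := by
    intro z hz
    refine HasSum.congr_fun (hasSum_taylorSeries_on_ball hhd hz) fun k => ?_
    simp only [ha, sub_zero, smul_eq_mul]
    ring
  set s : ℕ → ℂ := fun k => (r : ℂ) * (r ^ k * a k) +
    (1 - r) * ∑ p ∈ antidiagonal k, w ^ p.1 * (r ^ p.2 * a p.2) with hs
  have hsumS : ∀ z ∈ ball (0 : ℂ) 1, HasSum (fun k => s k * z ^ k) (g (r * z) / (1 - w * z)) := by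
    intro z hz
    have hz1 := mem_ball_zero_iff.mp hz
    have hrz : (r * z : ℂ) ∈ ball (0 : ℂ) 1 := by
      rw [mem_ball_zero_iff, norm_mul, norm_real, Real.norm_of_nonneg hr0]
      nlinarith [norm_nonneg z]
    have hH := hsum _ hrz
    have hwz : ‖w * z‖ < 1 := by rwa [norm_mul, hw1, one_mul]
    have hgeo := hasSum_geometric_of_norm_lt_one hwz
    have hprod := (summable_norm_sum_mul_antidiagonal_of_summable_norm
      hgeo.summable.norm hH.summable.norm).of_norm.hasSum
    rw [← tsum_mul_tsum_eq_tsum_sum_antidiagonal_of_summable_norm hgeo.summable.norm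
      hH.summable.norm, hgeo.tsum_eq, hH.tsum_eq] at hprod
    have hval : g (r * z) / (1 - w * z) =
        r * h (r * z) + (1 - r) * ((1 - w * z)⁻¹ * h (r * z)) := by
      have h1 := hne z hz
      have h2 := hne _ hrz
      have h3 : g (r * z) = h (r * z) * (1 - w * (r * z)) := by
        simp only [hh]; rw [div_mul_cancel₀ _ h2]
      rw [h3, div_eq_mul_inv]
      linear_combination (r : ℂ) * h (r * z) * mul_inv_cancel₀ h1
    rw [hval]
    refine HasSum.congr_fun ((hH.mul_left (r : ℂ)).add (hprod.mul_left (1 - r : ℂ))) fun k => ?_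
    simp only [hs, add_mul, mul_assoc, Finset.sum_mul]
    congr 1
    · ring
    · congr 1
      refine Finset.sum_congr rfl fun p hp => ?_
      rw [← Finset.HasAntidiagonal.mem_antidiagonal.mp hp]
      ring
  rw [bergman_norm (by fun_prop) hsumS, bergman_norm (by fun_prop) hsum, mul_left_comm]
  gcongr
  exact sum_coeff_le hr0 hr1 hw1 a m

/-! ### General measures -/

/-- The chain rule for a dilation holds without differentiability hypotheses, also for `c = 0`. -/
lemma iteratedDeriv_dilation (n : ℕ) (f : ℂ → ℂ) (c z : ℂ) :
    iteratedDeriv n (fun z => f (c * z)) z = c ^ n * iteratedDeriv n f (c * z) := by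
  induction n generalizing z with
  | zero => simp
  | succ n ih =>
    have : iteratedDeriv n (fun z => f (c * z)) = fun z => c ^ n * iteratedDeriv n f (c * z) :=
      funext ih
    rw [iteratedDeriv_succ, this, deriv_const_mul_field, deriv_comp_mul_left, iteratedDeriv_succ,
      smul_eq_mul, pow_succ, mul_assoc]

lemma differentiableOn_iteratedDeriv {f : ℂ → ℂ} (hf : DifferentiableOn ℂ f (ball 0 1)) (n : ℕ) :
    DifferentiableOn ℂ (iteratedDeriv n f) (ball 0 1) := by
  induction n with
  | zero => simpa using hf
  | succ n ih => rw [iteratedDeriv_succ]; exact ih.deriv isOpen_ball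

/-- Tonelli: the weighted integral against `P_μ` is the `μ`-average of the point-mass integrals. -/
lemma lintegral_Pmu_swap (μ : Measure ℂ) [IsFiniteMeasure μ] {G : ℂ → ℝ≥0∞} (hG : Measurable G)
    (m : ℕ) :
    ∫⁻ z in ball (0 : ℂ) 1, G z * Pmu μ z * ENNReal.ofReal ((1 - ‖z‖ ^ 2) ^ m) =
      ∫⁻ ζ, (∫⁻ z in ball (0 : ℂ) 1, G z * ENNReal.ofReal ((1 - ‖z‖ ^ 2) / ‖z - ζ‖ ^ 2) *
        ENNReal.ofReal ((1 - ‖z‖ ^ 2) ^ m)) ∂μ := by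
  rw [lintegral_lintegral_swap]
  · refine lintegral_congr fun z => ?_
    rw [lintegral_mul_const _ (by fun_prop), lintegral_const_mul _ (by fun_prop), Pmu]
  · exact Measurable.aemeasurable (by unfold Function.uncurry; fun_prop)

/-- `D_{μ,n}` in terms of the unnormalized area measure. -/
lemma Dmu_eq (n : ℕ) (μ : Measure ℂ) (f : ℂ → ℂ) :
    Dmu n μ f = ENNReal.ofReal (1 / ((n.factorial : ℝ) * ((n-1).factorial : ℝ))) *
      (ENNReal.ofReal Real.pi)⁻¹ * ∫⁻ z in ball (0:ℂ) 1, ‖iteratedDeriv n f z‖ₑ ^ 2 * Pmu μ z *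
      ENNReal.ofReal ((1 - ‖z‖^2)^(n-1)) := by
  rw [Dmu, nA, Measure.restrict_smul, lintegral_smul_measure, smul_eq_mul, mul_assoc]
  rfl

theorem stmt9 (n : ℕ) (hn : 1 ≤ n) (μ : Measure ℂ) [IsFiniteMeasure μ]
    (hμ : μ (sphere (0:ℂ) 1)ᶜ = 0)
    (f : ℂ → ℂ) (hf : DifferentiableOn ℂ f (ball (0:ℂ) 1))
    (r : ℝ) (hr0 : 0 ≤ r) (hr1 : r < 1) :
    Dmu n μ (fun z => f ((r : ℂ) * z)) ≤
      ENNReal.ofReal ((4 : ℝ) ^ (n - 1) * (2 - r) * r ^ (2 * n) / (1 + r) ^ (2 * n - 2)) *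
        Dmu n μ f := by
  obtain ⟨m, rfl⟩ : ∃ m, n = m + 1 := ⟨n - 1, by omega⟩
  set g := iteratedDeriv (m + 1) f with hg
  have hgd : DifferentiableOn ℂ g (ball 0 1) := differentiableOn_iteratedDeriv hf _
  have hgm : Measurable g := by rw [hg, iteratedDeriv_succ]; exact measurable_deriv _
  have hconst : r ^ (2 * (m + 1)) * (2 - r) ≤
      (4 : ℝ) ^ m * (2 - r) * r ^ (2 * (m + 1)) / (1 + r) ^ (2 * m) := by
    rw [le_div_iff₀ (by positivity)]
    have h4 : (1 + r) ^ (2 * m) ≤ (4 : ℝ) ^ m := by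
      rw [pow_mul]
      exact pow_le_pow_left₀ (by positivity) (by nlinarith) m
    have : 0 ≤ 2 - r := by linarith
    calc _ ≤ r ^ (2 * (m + 1)) * (2 - r) * (4 : ℝ) ^ m := by gcongr
      _ = _ := by ring
  have hmain : ∫⁻ z in ball (0 : ℂ) 1, ‖g (r * z)‖ₑ ^ 2 * Pmu μ z *
        ENNReal.ofReal ((1 - ‖z‖ ^ 2) ^ m) ≤
      ENNReal.ofReal (2 - r) * ∫⁻ z in ball (0 : ℂ) 1, ‖g z‖ₑ ^ 2 * Pmu μ z *
        ENNReal.ofReal ((1 - ‖z‖ ^ 2) ^ m) := by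
    rw [lintegral_Pmu_swap μ (by fun_prop), lintegral_Pmu_swap μ (by fun_prop),
      ← lintegral_const_mul' _ _ ENNReal.ofReal_ne_top]
    refine lintegral_mono_ae ?_
    have hsph : ∀ᵐ ζ ∂μ, ζ ∈ sphere (0 : ℂ) 1 := hμ
    filter_upwards [hsph] with ζ hζ
    exact point_mass_ineq hgd hgm hr0 hr1 (mem_sphere_zero_iff_norm.mp hζ) m
  have hdil : ∫⁻ z in ball (0 : ℂ) 1, ‖iteratedDeriv (m + 1) (fun z => f (r * z)) z‖ₑ ^ 2 *
        Pmu μ z * ENNReal.ofReal ((1 - ‖z‖ ^ 2) ^ m) =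
      ENNReal.ofReal (r ^ (2 * (m + 1))) * ∫⁻ z in ball (0 : ℂ) 1, ‖g (r * z)‖ₑ ^ 2 * Pmu μ z *
        ENNReal.ofReal ((1 - ‖z‖ ^ 2) ^ m) := by
    rw [← lintegral_const_mul' _ _ ENNReal.ofReal_ne_top]
    refine lintegral_congr fun z => ?_
    have hr : ‖(r : ℂ) ^ (m + 1)‖ₑ ^ 2 = ENNReal.ofReal (r ^ (2 * (m + 1))) := by
      rw [← ofReal_norm, ← ENNReal.ofReal_pow (norm_nonneg _), norm_pow, norm_real,
        Real.norm_of_nonneg hr0, ← pow_mul, mul_comm 2]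
    rw [iteratedDeriv_dilation, enorm_mul, mul_pow, hr]
    ring
  rw [Dmu_eq, Dmu_eq]
  simp only [Nat.add_sub_cancel, show 2 * (m + 1) - 2 = 2 * m by omega]
  rw [hdil, mul_left_comm (ENNReal.ofReal (_ / (1 + r) ^ (2 * m)))]
  refine mul_le_mul' le_rfl ?_
  calc _ ≤ ENNReal.ofReal (r ^ (2 * (m + 1))) * (ENNReal.ofReal (2 - r) *
        ∫⁻ z in ball (0 : ℂ) 1, ‖g z‖ₑ ^ 2 * Pmu μ z * ENNReal.ofReal ((1 - ‖z‖ ^ 2) ^ m)) := by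
        gcongr
    _ ≤ _ := by
        rw [← mul_assoc, ← ENNReal.ofReal_mul (by positivity)]
        exact mul_le_mul' (ENNReal.ofReal_le_ofReal hconst) le_rfl
end
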